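/- Let f : X → ℝ be Hölder continuous admitting a unique maximizing measure μ_∞, and let V be a calibrated subaction for f. If z ∈ X satisfies R_+^∞(z) < ∞, then the empirical measures ν_n := (1/n) Σ_{j=0}^{n−1} δ_{σ^j(z)} converge in the weak* topology to μ_∞ as n → ∞. -/

import Mathlib

open MeasureTheory Filter Topology Set ENNReal

noncomputable section

namespace GXY

variable {M : Type*}

/-- The shift map on the sequence space `ℕ → M`. -/
def shift (x : ℕ → M) : ℕ → M := fun n => x (n + 1)

/-- Prepending a symbol `a` to a sequence `x`. -/
def cons (a : M) (x : ℕ → M) : ℕ → M := fun n => Nat.casesOn n a x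

/-- The metric `d(x,y) = ∑ θ^n d_M(x_n, y_n)` on `ℕ → M`. -/
def D [MetricSpace M] (θ : ℝ) (x y : ℕ → M) : ℝ := ∑' n, θ ^ n * dist (x n) (y n)

/-- Hölder continuity with respect to the metric `D θ`. -/
def IsHolder [MetricSpace M] (θ : ℝ) (f : (ℕ → M) → ℝ) : Prop :=
  ∃ C > (0 : ℝ), ∃ α ∈ Set.Ioc (0 : ℝ) 1, ∀ x y, |f x - f y| ≤ C * (D θ x y) ^ α

/-- Shift-invariant Borel probability measures on `ℕ → M`. -/
def IsInvProb [MetricSpace M] [MeasurableSpace M] (μ : Measure (ℕ → M)) : Prop :=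
  IsProbabilityMeasure μ ∧ μ.map shift = μ

/-- The maximal ergodic average `β(f)`. -/
def betaF [MetricSpace M] [MeasurableSpace M] (f : (ℕ → M) → ℝ) : ℝ :=
  sSup { r | ∃ μ : Measure (ℕ → M), IsInvProb μ ∧ r = ∫ x, f x ∂μ }

/-- A maximizing measure for `f`. -/
def IsMaximizing [MetricSpace M] [MeasurableSpace M] (f : (ℕ → M) → ℝ)
    (μ : Measure (ℕ → M)) : Prop :=
  IsInvProb μ ∧ ∫ x, f x ∂μ = betaF f

/-- A calibrated subaction `V` for `f`:
`V y = max_{σ x = y} (f x + V x - β f)` for every `y`. -/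
def IsCalibrated [MetricSpace M] [MeasurableSpace M] (f V : (ℕ → M) → ℝ) : Prop :=
  Continuous V ∧
    ∀ y, IsGreatest { t | ∃ x, shift x = y ∧ t = f x + V x - betaF f } (V y)

/-- The Ruelle transfer operator `(L_g w)(x) = ∫_M e^{g(ax)} w(ax) dm(a)`. -/
def Ruelle [MetricSpace M] [MeasurableSpace M] (m : Measure M) (g w : (ℕ → M) → ℝ) :
    (ℕ → M) → ℝ :=
  fun x => ∫ a, Real.exp (g (cons a x)) * w (cons a x) ∂m

/-- `R₊ = β(f) + V ∘ σ - V - f ≥ 0`. -/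
def Rplus [MetricSpace M] [MeasurableSpace M] (f V : (ℕ → M) → ℝ) (x : ℕ → M) : ℝ :=
  betaF f + V (shift x) - V x - f x

/-- `R₊^∞(z) = ∑_{j≥0} R₊(σ^j z) ∈ [0,∞]`. -/
def RplusInf [MetricSpace M] [MeasurableSpace M] (f V : (ℕ → M) → ℝ) (z : ℕ → M) : ℝ≥0∞ :=
  ∑' j : ℕ, ENNReal.ofReal (Rplus f V (shift^[j] z))

/-- `R₋ = f + V - V ∘ σ - β(f) ≤ 0`. -/
def Rminus [MetricSpace M] [MeasurableSpace M] (f V : (ℕ → M) → ℝ) (x : ℕ → M) : ℝ :=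
  f x + V x - V (shift x) - betaF f

/-- The Birkhoff sum `R₋^k = ∑_{j<k} R₋ ∘ σ^j`. -/
def RminusBirk [MetricSpace M] [MeasurableSpace M] (f V : (ℕ → M) → ℝ) (k : ℕ)
    (z : ℕ → M) : ℝ :=
  ∑ j ∈ Finset.range k, Rminus f V (shift^[j] z)

/-- Extended-real logarithm with the convention `log 0 = -∞`. -/
def elog (t : ℝ) : EReal := if t = 0 then ⊥ else ((Real.log t : ℝ) : EReal)

/-! Averaging the identity `f = β(f) + V ∘ σ - V - R₊` along the orbit of `z`, the coboundary
contributes a bounded telescoping sum divided by `n`, and `R₊ (σ^j z) → 0` kills the last term, so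
the averages of `f` converge to `β(f)`. By compactness, the empirical measures have a weak limit
along every ultrafilter. This limit is shift-invariant and integrates `f` to `β(f)`, so it is
maximizing; uniqueness makes it independent of the ultrafilter. -/

theorem birkhoffAverage_comp_self {R X E : Type*} [DivisionSemiring R] [AddCommMonoid E]
    [Module R E] (T : X → X) (x : X) (g : X → E) (n : ℕ) :
    birkhoffAverage R T (g ∘ T) n x = birkhoffAverage R T g n (T x) := by
  simp only [birkhoffAverage, birkhoffSum, Function.comp_apply, ← Function.iterate_succ_apply',
    Function.iterate_succ_apply]

theorem tendsto_birkhoffAverage_of_coboundary_sub {X E : Type*} [NormedAddCommGroup E]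
    [NormedSpace ℝ E] {T : X → X} {x : X} {f V : X → E} {c : E}
    (hV : Bornology.IsBounded (range (V <| T^[·] x)))
    (h : Tendsto (birkhoffAverage ℝ T (fun y ↦ c + V (T y) - V y - f y) · x) atTop (𝓝 0)) :
    Tendsto (birkhoffAverage ℝ T f · x) atTop (𝓝 c) := by
  have hcob := tendsto_birkhoffAverage_apply_sub_birkhoffAverage ℝ hV
  have hlim := (hcob.const_add c).sub h
  rw [add_zero, sub_zero] at hlim
  refine hlim.congr' ?_
  filter_upwards [eventually_ne_atTop 0] with n hn
  have hconst : birkhoffAverage ℝ T (fun _ ↦ c) n x = c :=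
    congrFun (birkhoffAverage_of_comp_eq ℝ rfl (Nat.cast_ne_zero.2 hn)) x
  have hsplit : (fun y ↦ c + V (T y) - V y - f y) = (fun _ ↦ c) + V ∘ T - V - f := rfl
  rw [hsplit, birkhoffAverage_sub, birkhoffAverage_sub, birkhoffAverage_add]
  simp only [Pi.add_apply, Pi.sub_apply, hconst, birkhoffAverage_comp_self]
  abel

section EmpiricalMeasure

variable {X : Type*} [MeasurableSpace X]

/-- The empirical measure `(1 / n) ∑_{j < n} δ_{T^j x}` of the first `n` points of the orbit of `x`
under `T`. It is a probability measure for `n ≠ 0`, and the zero measure for `n = 0`. -/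
def empiricalMeasure (T : X → X) (x : X) (n : ℕ) : Measure X :=
  (n : ℝ≥0∞)⁻¹ • ∑ j ∈ Finset.range n, Measure.dirac (T^[j] x)

theorem isProbabilityMeasure_empiricalMeasure (T : X → X) (x : X) {n : ℕ} (hn : n ≠ 0) :
    IsProbabilityMeasure (empiricalMeasure T x n) where
  measure_univ := by
    simp [empiricalMeasure, ENNReal.inv_mul_cancel (Nat.cast_ne_zero.2 hn)]

theorem integral_empiricalMeasure {E : Type*} [NormedAddCommGroup E] [NormedSpace ℝ E]
    [CompleteSpace E] (T : X → X) (x : X) (n : ℕ) {w : X → E} (hw : StronglyMeasurable w) :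
    ∫ y, w y ∂empiricalMeasure T x n = birkhoffAverage ℝ T w n x := by
  rw [empiricalMeasure, integral_smul_measure,
    integral_finsetSum_measure fun j _ ↦ integrable_dirac' hw enorm_lt_top]
  simp only [integral_dirac' _ _ hw, ENNReal.toReal_inv, ENNReal.toReal_natCast, birkhoffAverage,
    birkhoffSum]

end EmpiricalMeasure

section WeakLimits

variable {X : Type*} [TopologicalSpace X] [MeasurableSpace X] [BorelSpace X] {T : X → X} {x : X}

variable (T x) in
theorem exists_tendsto_birkhoffAverage_integral [CompactSpace X] [T2Space X]
    {F : Ultrafilter ℕ} (hF : (F : Filter ℕ) ≤ atTop) :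
    ∃ μ : ProbabilityMeasure X, ∀ w : X → ℝ, Continuous w →
      Tendsto (birkhoffAverage ℝ T w · x) F (𝓝 (∫ y, w y ∂(μ : Measure X))) := by
  have hprob (n : ℕ) :
      ∃ ν : ProbabilityMeasure X, n ≠ 0 → (ν : Measure X) = empiricalMeasure T x n := by
    by_cases hn : n = 0
    · exact ⟨⟨Measure.dirac x, inferInstance⟩, fun h ↦ absurd hn h⟩
    · exact ⟨⟨_, isProbabilityMeasure_empiricalMeasure T x hn⟩, fun _ ↦ rfl⟩
  choose ν hν using hprob
  have hlim : Tendsto ν F (𝓝 (F.map ν).lim) := (F.map ν).le_nhds_lim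
  refine ⟨(F.map ν).lim, fun w hw ↦ ?_⟩
  have hint := ProbabilityMeasure.tendsto_iff_forall_integral_tendsto.1 hlim
    (BoundedContinuousFunction.mkOfCompact ⟨w, hw⟩)
  refine hint.congr' ?_
  filter_upwards [hF (eventually_ne_atTop 0)] with n hn
  rw [hν n hn]
  exact integral_empiricalMeasure T x n hw.measurable.stronglyMeasurable

theorem measurePreserving_of_tendsto_birkhoffAverage [HasOuterApproxClosed X] {μ : Measure X}
    [IsFiniteMeasure μ] {F : Filter ℕ} [F.NeBot] (hF : F ≤ atTop) (hT : Continuous T)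
    (hμ : ∀ w : BoundedContinuousFunction X ℝ,
      Tendsto (birkhoffAverage ℝ T w · x) F (𝓝 (∫ y, w y ∂μ))) :
    MeasurePreserving T μ μ := by
  refine ⟨hT.measurable, ext_of_forall_integral_eq_of_IsFiniteMeasure fun w ↦ ?_⟩
  rw [integral_map hT.aemeasurable w.continuous.aestronglyMeasurable]
  have hcomp : Tendsto (birkhoffAverage ℝ T w · (T x)) F (𝓝 (∫ y, w (T y) ∂μ)) :=
    (hμ (w.compContinuous ⟨T, hT⟩)).congr fun n ↦ birkhoffAverage_comp_self T x w n
  have hdiff := tendsto_birkhoffAverage_apply_sub_birkhoffAverage' ℝ w.isBounded_range T x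
  exact sub_eq_zero.1 (tendsto_nhds_unique (hcomp.sub (hμ w)) (hdiff.mono_left hF))

theorem tendsto_birkhoffAverage_of_unique_invariant [CompactSpace X] [HasOuterApproxClosed X]
    [T2Space X] (hT : Continuous T) {f : X → ℝ} (hf : Continuous f) {c : ℝ}
    (hfx : Tendsto (birkhoffAverage ℝ T f · x) atTop (𝓝 c)) {μ : Measure X}
    (huniq : ∀ ν : Measure X, IsProbabilityMeasure ν → MeasurePreserving T ν ν →
      ∫ y, f y ∂ν = c → ν = μ)
    {w : X → ℝ} (hw : Continuous w) :
    Tendsto (birkhoffAverage ℝ T w · x) atTop (𝓝 (∫ y, w y ∂μ)) := by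
  rw [tendsto_iff_ultrafilter]
  intro F hF
  obtain ⟨ν, hν⟩ := exists_tendsto_birkhoffAverage_integral T x hF
  have hinv : MeasurePreserving T (ν : Measure X) ν :=
    measurePreserving_of_tendsto_birkhoffAverage hF hT fun g ↦ hν g g.continuous
  have hint : ∫ y, f y ∂(ν : Measure X) = c := tendsto_nhds_unique (hν f hf) (hfx.mono_left hF)
  rw [← huniq ν inferInstance hinv hint]
  exact hν w hw

end WeakLimits

theorem continuous_shift [TopologicalSpace M] : Continuous (shift : (ℕ → M) → ℕ → M) :=
  continuous_pi fun n ↦ continuous_apply (n + 1)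

section Holder

variable [MetricSpace M] {θ : ℝ}

theorem continuous_D [BoundedSpace M] (hθ : |θ| < 1) :
    Continuous fun p : (ℕ → M) × (ℕ → M) ↦ D θ p.1 p.2 := by
  refine continuous_tsum (u := fun n ↦ |θ| ^ n * Metric.diam (univ : Set M)) (fun n ↦ by fun_prop)
    ((summable_geometric_of_lt_one (abs_nonneg θ) hθ).mul_right _) fun n p ↦ ?_
  rw [norm_mul, norm_pow, Real.norm_eq_abs, Real.norm_of_nonneg dist_nonneg]
  gcongr
  exact Metric.dist_le_diam_of_mem (.all univ) (mem_univ _) (mem_univ _)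

theorem D_self (θ : ℝ) (x : ℕ → M) : D θ x x = 0 := by
  simp [D]

theorem IsHolder.continuous [BoundedSpace M] (hθ : |θ| < 1) {f : (ℕ → M) → ℝ}
    (hf : IsHolder θ f) : Continuous f := by
  obtain ⟨C, -, α, ⟨hα, -⟩, hle⟩ := hf
  refine continuous_iff_continuousAt.2 fun x ↦ tendsto_iff_dist_tendsto_zero.2 ?_
  have hD : Continuous fun y ↦ C * D θ y x ^ α :=
    (((continuous_D hθ).comp (.prodMk_left x)).rpow_const fun _ ↦ .inr hα.le).const_mul C
  have hlim : Tendsto (fun y ↦ C * D θ y x ^ α) (𝓝 x) (𝓝 0) :=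
    hD.tendsto' x 0 (by rw [D_self, Real.zero_rpow hα.ne', mul_zero])
  exact squeeze_zero (fun _ ↦ dist_nonneg) (fun y ↦ hle y x) hlim

end Holder

section Subaction

variable [MetricSpace M] [MeasurableSpace M] {f V : (ℕ → M) → ℝ}

theorem IsCalibrated.Rplus_nonneg (hV : IsCalibrated f V) (x : ℕ → M) : 0 ≤ Rplus f V x := by
  have hle : f x + V x - betaF f ≤ V (shift x) := (hV.2 (shift x)).2 ⟨x, rfl, rfl⟩
  unfold Rplus
  linarith

theorem tendsto_birkhoffAverage_Rplus (hnonneg : ∀ x, 0 ≤ Rplus f V x) {z : ℕ → M}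
    (hz : RplusInf f V z ≠ ⊤) :
    Tendsto (birkhoffAverage ℝ shift (Rplus f V) · z) atTop (𝓝 0) := by
  have hterm : Tendsto (fun j ↦ Rplus f V (shift^[j] z)) atTop (𝓝 0) := by
    refine (ENNReal.summable_toReal hz).tendsto_atTop_zero.congr fun j ↦ ?_
    exact ENNReal.toReal_ofReal (hnonneg _)
  exact hterm.cesaro

end Subaction

theorem empirical_measures_converge_to_maximizing_measure_general
    [MetricSpace M] [CompactSpace M] [MeasurableSpace M] [BorelSpace M]
    {f V : (ℕ → M) → ℝ} (hf : Continuous f) {μinf : Measure (ℕ → M)}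
    (huniq : ∀ μ' : Measure (ℕ → M), IsMaximizing f μ' → μ' = μinf)
    {z : ℕ → M} (hV : Bornology.IsBounded (range (V <| shift^[·] z)))
    (hz : Tendsto (birkhoffAverage ℝ shift (Rplus f V) · z) atTop (𝓝 0))
    {w : (ℕ → M) → ℝ} (hw : Continuous w) :
    Tendsto (birkhoffAverage ℝ shift w · z) atTop (𝓝 (∫ x, w x ∂μinf)) := by
  have : SecondCountableTopology M := UniformSpace.secondCountable_of_separable M
  refine tendsto_birkhoffAverage_of_unique_invariant continuous_shift hf
    (tendsto_birkhoffAverage_of_coboundary_sub hV hz) (fun ν hν hinv hint ↦ ?_) hw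
  exact huniq ν ⟨⟨hν, hinv.map_eq⟩, hint⟩

theorem empirical_measures_converge_to_maximizing_measure
    [MetricSpace M] [CompactSpace M] [ConnectedSpace M] [MeasurableSpace M] [BorelSpace M]
    (hdiam : ∀ a b : M, dist a b ≤ 1)
    (θ : ℝ) (hθ : θ ∈ Set.Ioo (0 : ℝ) 1)
    (f V : (ℕ → M) → ℝ) (hf : IsHolder θ f)
    (μinf : Measure (ℕ → M)) (hmax : IsMaximizing f μinf)
    (huniq : ∀ μ' : Measure (ℕ → M), IsMaximizing f μ' → μ' = μinf)
    (hV : IsCalibrated f V)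
    (z : ℕ → M) (hz : RplusInf f V z ≠ ⊤) :
    ∀ w : (ℕ → M) → ℝ, Continuous w →
      Tendsto (fun n : ℕ => (1 / (n : ℝ)) * ∑ j ∈ Finset.range n, w (shift^[j] z)) atTop
        (nhds (∫ x, w x ∂μinf)) := by
  intro w hw
  simpa only [birkhoffAverage, birkhoffSum, one_div, smul_eq_mul] using
    empirical_measures_converge_to_maximizing_measure_general
      (hf.continuous ((abs_of_pos hθ.1).trans_lt hθ.2)) huniq
      ((isCompact_range hV.1).isBounded.subset (range_comp_subset_range _ V))
      (tendsto_birkhoffAverage_Rplus hV.Rplus_nonneg hz) hw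

end GXY
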